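/- (Remark of Section 7: minimizing φ over coefficient matrices derived from stationary distributions recovers the minimum energy.) Suppose there exists a minimizer y* ∈ 𝒴^n of the energy 𝓔(y^n) = H(m(y^n)) + α·d_n(x^n,y^n) such that every entry of m(y*) is strictly positive. For a |𝒴|×|𝒴|^k matrix q with strictly positive entries let Λ(q) be the matrix with entries log((Σ_{β'∈𝒴} q_{β',b})/q_{β,b}), and define φ(Λ) = min_{z^n∈𝒴^n} [ Σ_{β,b} Λ_{β,b}·m_{β,b}(z^n) + α·d_n(x^n,z^n) ]. Then for every |𝒴|×|𝒴|^k matrix q with strictly positive entries summing to 1 that satisfies the stationarity condition Σ_{β∈𝒴} q_{β,(b_1,…,b_k)} = Σ_{β∈𝒴} q_{b_k,(β,b_1,…,b_{k−1})} for all (b_1,…,b_k) ∈ 𝒴^k, one has φ(Λ(q)) ≥ min_{y^n∈𝒴^n} 𝓔(y^n), and equality holds for q = m(y*). -/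

import Mathlib

/-!
For nonnegative `m` and positive `q`, Gibbs' inequality applied in each context `b` gives
`H(m) ≤ ∑_{β,b} Λ(q)_{β,b} m_{β,b}`, with equality when `q = m` (`condEnt_le`, `condEnt_eq`).
Hence the linearized cost with coefficients `Λ(q)` dominates the energy at every sequence, and
taking minima gives `min 𝓔 ≤ φ(Λ(q))`. For `q = m(y*)` the linearized cost at `y*` equals
`𝓔(y*) = min 𝓔`, so `φ(Λ(m(y*))) ≤ min 𝓔` as well.
-/


/-- The entropy `𝓗(v)` of the (unnormalized) nonnegative vector `v`:
`𝓗(v) = ∑ i, (v i / ‖v‖₁) * log (‖v‖₁ / v i)` if `v ≠ 0`, and `𝓗(0) = 0`,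
where for a vector with nonnegative components `‖v‖₁ = ∑ i, v i`. -/
noncomputable def vecEnt {ι : Type*} [Fintype ι] (v : ι → ℝ) : ℝ :=
  @ite ℝ (v = 0) (Classical.propDecidable _) 0
    (∑ i, (v i / ∑ j, v j) * Real.log ((∑ j, v j) / v i))

/-- Conditional empirical entropy of a `|𝒴| × |𝒴|^k` matrix `m` with nonnegative entries:
`H(m) = ∑_{b ∈ 𝒴^k} (∑_{β ∈ 𝒴} m_{β,b}) ⬝ 𝓗(m_{·,b})`. -/
noncomputable def condEnt {Y : Type*} [Fintype Y] {k : ℕ} (m : Y → (Fin k → Y) → ℝ) : ℝ :=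
  ∑ b : Fin k → Y, (∑ β : Y, m β b) * vecEnt (fun β => m β b)

/-- The `(k+1)`-th order empirical count matrix of a cyclic sequence `y` of length `n`:
`m_{β,b}(y^n) = (1/n)·|{1 ≤ i ≤ n : (y_{i−k},…,y_{i−1}) = b and y_i = β}|`,
with indices taken cyclically (modulo `n`). -/
noncomputable def empM {Y : Type*} [Fintype Y] [DecidableEq Y] (n k : ℕ) [NeZero n]
    (y : ZMod n → Y) (β : Y) (b : Fin k → Y) : ℝ :=
  ((Finset.univ.filter (fun i : ZMod n =>
      y i = β ∧ ∀ j : Fin k, y (i - (k : ZMod n) + ((j : ℕ) : ZMod n)) = b j)).card : ℝ) / n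

/-- Average per-letter distortion `d_n(x^n, y^n) = (1/n) ∑_{i=1}^n d(x_i, y_i)`. -/
noncomputable def distn {X Y : Type*} (n : ℕ) [NeZero n] (d : X → Y → ℝ)
    (x : ZMod n → X) (y : ZMod n → Y) : ℝ :=
  (∑ i : ZMod n, d (x i) (y i)) / n

/-- The energy (cost of problem (P1)): `𝓔(y^n) = H(m(y^n)) + α·d_n(x^n, y^n)`. -/
noncomputable def energy {X Y : Type*} [Fintype Y] [DecidableEq Y] (n k : ℕ) [NeZero n]
    (x : ZMod n → X) (α : ℝ) (d : X → Y → ℝ) (y : ZMod n → Y) : ℝ :=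
  condEnt (fun β b => empM n k y β b) + α * distn n d x y

/-- The linearized cost (problem (P2)):
`∑_{β,b} λ_{β,b}·m_{β,b}(y^n) + α·d_n(x^n, y^n)`. -/
noncomputable def linCost {X Y : Type*} [Fintype Y] [DecidableEq Y] (n k : ℕ) [NeZero n]
    (x : ZMod n → X) (α : ℝ) (d : X → Y → ℝ) (lam : Y → (Fin k → Y) → ℝ)
    (y : ZMod n → Y) : ℝ :=
  (∑ β : Y, ∑ b : Fin k → Y, lam β b * empM n k y β b) + α * distn n d x y

/-- The coefficient matrix `Λ(q)` of a positive matrix `q`: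
`λ_{β,b} = log((∑_{β'} q_{β',b}) / q_{β,b})`. -/
noncomputable def lamOf {Y : Type*} [Fintype Y] {k : ℕ}
    (q : Y → (Fin k → Y) → ℝ) (β : Y) (b : Fin k → Y) : ℝ :=
  Real.log ((∑ β' : Y, q β' b) / q β b)

/-- `φ(Λ) = min_{z^n ∈ 𝒴^n} [ ∑_{β,b} Λ_{β,b}·m_{β,b}(z^n) + α·d_n(x^n,z^n) ]`. -/
noncomputable def phi {X Y : Type*} [Fintype Y] [DecidableEq Y] (n k : ℕ) [NeZero n]
    (x : ZMod n → X) (α : ℝ) (d : X → Y → ℝ) (lam : Y → (Fin k → Y) → ℝ) : ℝ :=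
  ⨅ z : ZMod n → Y, linCost n k x α d lam z

/-- Multiplying by the total mass clears the denominators in `vecEnt`; the case `v = 0` of the
definition is absorbed because both sides then vanish. -/
lemma sum_mul_vecEnt {ι : Type*} [Fintype ι] (v : ι → ℝ) (hv : ∀ i, 0 ≤ v i) :
    (∑ i, v i) * vecEnt v = ∑ i, v i * Real.log ((∑ j, v j) / v i) := by
  unfold vecEnt
  split_ifs with h
  · simp [h]
  · have hS : (∑ j, v j) ≠ 0 := by
      intro h0
      apply h
      funext i
      exact (Finset.sum_eq_zero_iff_of_nonneg (fun i _ => hv i)).1 h0 i (Finset.mem_univ i)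
    rw [Finset.mul_sum]
    refine Finset.sum_congr rfl fun i _ => ?_
    field_simp

/-- Gibbs' inequality for unnormalized vectors. -/
lemma gibbs {ι : Type*} [Fintype ι] (v q : ι → ℝ) (hv : ∀ i, 0 ≤ v i) (hq : ∀ i, 0 < q i) :
    ∑ i, v i * Real.log ((∑ j, v j) / v i) ≤ ∑ i, Real.log ((∑ j, q j) / q i) * v i := by
  rcases isEmpty_or_nonempty ι with _ | _
  · simp
  have hQ : 0 < ∑ j, q j := Finset.sum_pos (fun i _ => hq i) Finset.univ_nonempty
  set S := ∑ j, v j with hS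
  set Q := ∑ j, q j with hQdef
  have hS0 : 0 ≤ S := Finset.sum_nonneg fun i _ => hv i
  -- The termwise bound is `log t ≤ t - 1` at `t = S q_i / (Q v_i)`; the corrections sum to `0`.
  have key : ∀ i, v i * Real.log (S / v i) ≤
      Real.log (Q / q i) * v i + (S * (q i / Q) - v i) := by
    intro i
    have hqi := hq i
    rcases (hv i).eq_or_lt with h0 | hpos
    · rw [← h0]
      have : 0 ≤ S * (q i / Q) := by positivity
      simpa using this
    · have hSp : 0 < S := hpos.trans_le
        (Finset.single_le_sum (fun j _ => hv j) (Finset.mem_univ i))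
      have h1 := Real.log_le_sub_one_of_pos (x := (S / v i) / (Q / q i)) (by positivity)
      rw [Real.log_div (by positivity) (by positivity)] at h1
      have h2 := mul_le_mul_of_nonneg_left h1 hpos.le
      have h3 : v i * ((S / v i) / (Q / q i) - 1) = S * (q i / Q) - v i := by
        field_simp
      rw [h3] at h2
      linarith
  have hsum : ∑ i, (S * (q i / Q) - v i) = 0 := by
    rw [Finset.sum_sub_distrib, ← Finset.mul_sum, ← Finset.sum_div, ← hQdef, ← hS,
      div_self hQ.ne', mul_one, sub_self]
  calc _ ≤ ∑ i, (Real.log (Q / q i) * v i + (S * (q i / Q) - v i)) :=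
        Finset.sum_le_sum fun i _ => key i
    _ = _ := by rw [Finset.sum_add_distrib, hsum, add_zero]

lemma condEnt_le {Y : Type*} [Fintype Y] {k : ℕ} (m q : Y → (Fin k → Y) → ℝ)
    (hm : ∀ β b, 0 ≤ m β b) (hq : ∀ β b, 0 < q β b) :
    condEnt m ≤ ∑ β, ∑ b, lamOf q β b * m β b := by
  rw [Finset.sum_comm]
  refine Finset.sum_le_sum fun b _ => ?_
  rw [sum_mul_vecEnt (fun β => m β b) fun β => hm β b]
  exact gibbs _ (fun β => q β b) (fun β => hm β b) (fun β => hq β b)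

lemma condEnt_eq {Y : Type*} [Fintype Y] {k : ℕ} (m : Y → (Fin k → Y) → ℝ)
    (hm : ∀ β b, 0 ≤ m β b) :
    condEnt m = ∑ β, ∑ b, lamOf m β b * m β b := by
  rw [Finset.sum_comm]
  refine Finset.sum_congr rfl fun b _ => ?_
  rw [sum_mul_vecEnt (fun β => m β b) fun β => hm β b]
  exact Finset.sum_congr rfl fun β _ => mul_comm _ _

lemma empM_nonneg {Y : Type*} [Fintype Y] [DecidableEq Y] (n k : ℕ) [NeZero n]
    (y : ZMod n → Y) (β : Y) (b : Fin k → Y) : 0 ≤ empM n k y β b := by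
  unfold empM
  positivity

/-- `φ(Λ(q))` dominates the minimal energy for every positive matrix `q`. -/
lemma iInf_energy_le_phi {X Y : Type*} [Fintype Y] [Nonempty Y] [DecidableEq Y]
    (n k : ℕ) [NeZero n] (x : ZMod n → X) (α : ℝ) (d : X → Y → ℝ)
    (q : Y → (Fin k → Y) → ℝ) (hq : ∀ β b, 0 < q β b) :
    (⨅ y : ZMod n → Y, energy n k x α d y) ≤ phi n k x α d (lamOf q) := by
  -- `ZMod n → Y` is finite, so both infima are attained and no junk value of `⨅` occurs.
  have : Finite (ZMod n) := Finite.of_fintype _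
  refine ciInf_mono (Set.finite_range _).bddBelow fun z => ?_
  have := condEnt_le (empM n k z) q (empM_nonneg n k z) hq
  unfold energy linCost
  linarith

/-- Remark of Section 7: if some minimizer `y*` of the energy has a strictly
positive type `m(y*)`, then for every strictly positive stationary pmf matrix `q` on
`𝒴^{k+1}` one has `φ(Λ(q)) ≥ min_{y^n} 𝓔(y^n)`, with equality at `q = m(y*)`. -/
theorem stmt13 {X Y : Type*} [Fintype X] [Fintype Y] [Nonempty X] [Nonempty Y] [DecidableEq Y]
    (n k : ℕ) [NeZero n] (hk : 0 < k)
    (x : ZMod n → X) (α : ℝ) (hα : 0 ≤ α)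
    (d : X → Y → ℝ) (hd : ∀ a b, 0 ≤ d a b)
    (ystar : ZMod n → Y)
    (hmin : ∀ y : ZMod n → Y, energy n k x α d ystar ≤ energy n k x α d y)
    (hpos : ∀ (β : Y) (b : Fin k → Y), 0 < empM n k ystar β b) :
    (∀ q : Y → (Fin k → Y) → ℝ,
      (∀ (β : Y) (b : Fin k → Y), 0 < q β b) →
      (∑ β : Y, ∑ b : Fin k → Y, q β b = 1) →
      (∀ b : Fin k → Y,
        ∑ β : Y, q β b =
          ∑ β : Y, q (b ⟨k - 1, Nat.sub_lt hk Nat.one_pos⟩)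
            (fun j : Fin k => if h : (j : ℕ) = 0 then β
              else b ⟨(j : ℕ) - 1, Nat.lt_of_le_of_lt (Nat.sub_le _ _) j.isLt⟩)) →
      (⨅ y : ZMod n → Y, energy n k x α d y) ≤ phi n k x α d (lamOf q)) ∧
    phi n k x α d (lamOf (empM n k ystar)) = ⨅ y : ZMod n → Y, energy n k x α d y := by
  refine ⟨fun q hq _ _ => iInf_energy_le_phi n k x α d q hq, le_antisymm ?_
    (iInf_energy_le_phi n k x α d _ hpos)⟩
  have : Finite (ZMod n) := Finite.of_fintype _
  have heq : linCost n k x α d (lamOf (empM n k ystar)) ystar = energy n k x α d ystar := by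
    unfold energy linCost
    rw [condEnt_eq _ (empM_nonneg n k ystar)]
  exact (ciInf_le (Set.finite_range _).bddBelow ystar).trans (heq.le.trans (le_ciInf hmin))
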